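/- arXiv:1807.00354 — 2 statements merged into one kernel-verified Lean document; each statement's English description precedes it below -/
import Mathlib

section
/- Let G be a finitely generated group of polynomial volume growth and let μ be a symmetric probability measure on G belonging to P_⪯(G,reg). Then every bounded function u : G → ℝ satisfying u(x) = ∑_{y∈G} u(xy) μ(y) for all x ∈ G is constant. -/
/-!
The proof uses entropy, and needs neither the structure theory of groups of polynomial growth nor
the comparison of the functions `Φ_i`.

Regular variation of positive index makes each long-range component of `μ` decay fast enough
compared with the growth of its subgroup that `w g = (1 + |g|) ^ α` has a finite `μ`-mean for some
`0 < α < 1` (`moment_component`); here `|g|` is the word length of `G`, which on each subgroup is at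
most a multiple of the subgroup's own word length. Since `w` is subadditive, its mean under the
convolution power `μ^{*n}` is at most linear in `n` (`moment_lpow`). Polynomial growth makes
`(1 + w) ^ (-B)` summable for large `B`, so Gibbs' inequality bounds the entropy `H(μ^{*n})`, and
this bound grows with arbitrarily small slope in `n` (`entropy_le`). Hence the increments
`H(μ^{*(n+1)}) - H(μ^{*n})` take arbitrarily small values.

Such an increment is the `μ`-average over `x` of the relative entropy of `δ_x * μ^{*n}` with respect
to `μ^{*(n+1)}`, so it controls their Hellinger distance (`hellinger_le`) and then their total
variation distance (`l1_le`) for each atom `x` of `μ`. A bounded harmonic `u` satisfies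
`u (g x) = ∑ u (g y) (δ_x * μ^{*n})(y)` and `u g = ∑ u (g y) μ^{*(n+1)}(y)`, so `u (g x) = u g` for
each atom `x`; the atoms generate `G`, and `u` is constant (`liouville_of_moment`).
-/

open scoped BigOperators Classical

noncomputable section

/-- A symmetric probability measure on a discrete group `G`. -/
def IsSymmProb {G : Type*} [Group G] (μ : G → ℝ) : Prop :=
  (∀ g, 0 ≤ μ g) ∧ Summable μ ∧ (∑' g, μ g) = 1 ∧ (∀ g, μ g⁻¹ = μ g)

/-- Convolution powers of `μ` : `convPow μ 0 = δ_e`, `convPow μ (n+1) = (convPow μ n) * μ`. -/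
def convPow {G : Type*} [Group G] (μ : G → ℝ) : ℕ → G → ℝ
  | 0 => fun x => if x = 1 then 1 else 0
  | n + 1 => fun x => ∑' y, convPow μ n y * μ (y⁻¹ * x)

/-- The Dirichlet form of `μ`. -/
def dirichletForm {G : Type*} [Group G] (μ : G → ℝ) (f : G → ℝ) : ℝ :=
  (1 / 2) * ∑' q : G × G, (f (q.1 * q.2) - f q.1) ^ 2 * μ q.2

/-- The spectral profile `Λ_{2,G,μ}`. -/
def spectralProfile {G : Type*} [Group G] (μ : G → ℝ) (v : ℝ) : ℝ :=
  sInf { r : ℝ | ∃ f : G → ℝ, 1 ≤ (Function.support f).ncard ∧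
    ((Function.support f).ncard : ℝ) ≤ v ∧
    r = dirichletForm μ f / ∑' x, (f x) ^ 2 }

/-- Word length with respect to a set `S` of generators. -/
def wordLength {G : Type*} [Group G] (S : Set G) (g : G) : ℕ :=
  sInf { n : ℕ | ∃ l : List G, l.length = n ∧ (∀ x ∈ l, x ∈ S) ∧ l.prod = g }

/-- `F` is regularly varying at infinity of index `γ`. -/
def RegVaryAt (F : ℝ → ℝ) (γ : ℝ) : Prop :=
  ∀ l : ℝ, 0 < l →
    Filter.Tendsto (fun t => F (l * t) / F t) Filter.atTop (nhds (l ^ γ))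

/-- `G` is finitely generated of polynomial volume growth. -/
def HasPolyGrowth (G : Type*) [Group G] : Prop :=
  ∃ (S : Finset G) (D c C : ℝ), (∀ s ∈ S, s⁻¹ ∈ S) ∧
    Subgroup.closure (S : Set G) = ⊤ ∧ 0 < c ∧ c ≤ C ∧
    ∀ r : ℝ, 1 ≤ r →
      c * r ^ D ≤ (({g : G | (wordLength (S : Set G) g : ℝ) ≤ r}).ncard : ℝ) ∧
      (({g : G | (wordLength (S : Set G) g : ℝ) ≤ r}).ncard : ℝ) ≤ C * r ^ D

/-- A norm on the group `G`. -/
def IsGroupNorm {G : Type*} [Group G] (N : G → ℝ) : Prop :=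
  (∀ g, 0 ≤ N g) ∧ N 1 = 0 ∧ (∀ g, N g⁻¹ = N g) ∧ ∀ g h, N (g * h) ≤ N g + N h

/-- A quasi-norm on the group `G`, with quasi-triangle constant `A`. -/
def IsQuasiNorm {G : Type*} [Group G] (N : G → ℝ) (A : ℝ) : Prop :=
  1 ≤ A ∧ (∀ g, 0 ≤ N g) ∧ N 1 = 0 ∧ (∀ g, N g⁻¹ = N g) ∧
    ∀ g h, N (g * h) ≤ A * (N g + N h)

/-- `f ⪯ g` in a neighborhood of infinity. -/
def Preceq (f g : ℝ → ℝ) : Prop :=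
  ∃ c₁ c₂ M : ℝ, 0 < c₁ ∧ 0 < c₂ ∧ ∀ x, M ≤ x → f x ≤ c₁ * g (c₂ * x)

/-- `Φ(t) = t²/∫₀ᵗ 2s/φ(s) ds` for `t ≥ 1`, extended linearly on `[0,1]` with `Φ(0)=0`. -/
def PhiOf (φ : ℝ → ℝ) (t : ℝ) : ℝ :=
  if 1 ≤ t then t ^ 2 / (intervalIntegral (fun s => 2 * s / φ s) 0 t MeasureTheory.volume)
  else t * (1 / (intervalIntegral (fun s => 2 * s / φ s) 0 1 MeasureTheory.volume))

/-- Generalized right-continuous inverse `F⁻¹(v) = inf {t ≥ 1 : F(t) ≥ v}`. -/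
def Finv (F : ℝ → ℝ) (v : ℝ) : ℝ := sInf { t : ℝ | 1 ≤ t ∧ v ≤ F t }

/-- The set of products of exactly `Q` elements of `U`. -/
def prodSet {G : Type*} [Group G] (Q : ℕ) (U : Set G) : Set G :=
  { g | ∃ l : List G, l.length = Q ∧ (∀ x ∈ l, x ∈ U) ∧ l.prod = g }

/-- The data witnessing that `μ` belongs to `P(G,reg)`. -/
structure PGRegData {G : Type*} [Group G] (μ : G → ℝ) where
  k : ℕ
  p0 : ℝ
  μ0 : G → ℝ
  p : Fin k → ℝ
  μi : Fin k → G → ℝ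
  Hsub : Fin k → Subgroup G
  S : Fin k → Finset G
  φ : Fin k → ℝ → ℝ
  d : Fin k → ℝ
  p0_nonneg : 0 ≤ p0
  p_pos : ∀ i, 0 < p i
  p_sum : p0 + ∑ i, p i = 1
  μ0_symm : IsSymmProb μ0
  μ0_fin : (Function.support μ0).Finite
  μ_eq : ∀ g, μ g = p0 * μ0 g + ∑ i, p i * μi i g
  μi_symm : ∀ i, IsSymmProb (μi i)
  μi_supp : ∀ i, ∀ g, g ∉ Hsub i → μi i g = 0
  S_symm : ∀ i, ∀ s ∈ S i, s⁻¹ ∈ S i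
  S_gen : ∀ i, Subgroup.closure ((S i : Set G)) = Hsub i
  growth : ∀ i, ∃ c C : ℝ, 0 < c ∧ c ≤ C ∧ ∀ r : ℝ, 1 ≤ r →
      c * r ^ d i ≤
        (({h : G | h ∈ Hsub i ∧ (wordLength (S i : Set G) h : ℝ) ≤ r}).ncard : ℝ) ∧
      (({h : G | h ∈ Hsub i ∧ (wordLength (S i : Set G) h : ℝ) ≤ r}).ncard : ℝ) ≤
        C * r ^ d i
  φ_pos : ∀ i, ∀ t : ℝ, 0 ≤ t → 0 < φ i t
  φ_mono : ∀ i, MonotoneOn (φ i) (Set.Ici 0)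
  φ_reg : ∀ i, ∃ γ : ℝ, 0 < γ ∧ RegVaryAt (φ i) γ
  μi_comp : ∀ i, ∃ c C : ℝ, 0 < c ∧ c ≤ C ∧ ∀ h ∈ Hsub i,
      (c ≤ μi i h * φ i (1 + (wordLength (S i : Set G) h : ℝ)) *
        (1 + (wordLength (S i : Set G) h : ℝ)) ^ d i ∧
      μi i h * φ i (1 + (wordLength (S i : Set G) h : ℝ)) *
        (1 + (wordLength (S i : Set G) h : ℝ)) ^ d i ≤ C)
  eps_gen : ∃ ε : ℝ, 0 < ε ∧ ({g : G | ε < μ g}).Finite ∧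
      Subgroup.closure {g : G | ε < μ g} = ⊤ ∧ (1 : G) ∈ {g : G | ε < μ g}

/-- `μ` belongs to `P_⪯(G,reg)` : it belongs to `P(G,reg)` and the associated functions
`Φ_i` are totally ordered by `⪯` near infinity. -/
def MemPGRegOrd {G : Type*} [Group G] (μ : G → ℝ) : Prop :=
  ∃ D : PGRegData μ, ∀ i j : Fin D.k, i ≠ j →
    Preceq (PhiOf (D.φ i)) (PhiOf (D.φ j)) ∨ Preceq (PhiOf (D.φ j)) (PhiOf (D.φ i))

/-! ### Convolution and entropy -/

/-- Left convolution `μ * p` of functions on a group; a junk value `0` occurs only where the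
defining series diverges, which does not happen for summable nonnegative `μ` and bounded `p`. -/
def lconv {G : Type*} [Group G] (μ p : G → ℝ) (y : G) : ℝ := ∑' x, μ x * p (x⁻¹ * y)

/-- `p` is a probability mass function, with real values. -/
def IsProb {G : Type*} (p : G → ℝ) : Prop := (∀ g, 0 ≤ p g) ∧ HasSum p 1

/-- The Shannon entropy of `p`; it is junk unless `negMulLog ∘ p` is summable. -/
def entropy {G : Type*} (p : G → ℝ) : ℝ := ∑' g, Real.negMulLog (p g)

/-- The shear `(y, x) ↦ (x, x⁻¹ y)`, which turns a convolution into a sum over a product. -/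
def shear (G : Type*) [Group G] : G × G ≃ G × G where
  toFun q := (q.2, q.2⁻¹ * q.1)
  invFun q := (q.1 * q.2, q.1)
  left_inv q := by simp
  right_inv q := by simp

lemma IsProb.le_one {G : Type*} {p : G → ℝ} (hp : IsProb p) (g : G) : p g ≤ 1 :=
  le_hasSum hp.2 g fun j _ => hp.1 j

lemma IsProb.prod {G : Type*} {μ p : G → ℝ} (hμ : IsProb μ) (hp : IsProb p) :
    HasSum (fun q : G × G => μ q.1 * p q.2) 1 := by
  simpa using hμ.2.mul hp.2 (hμ.2.summable.mul_of_nonneg hp.2.summable hμ.1 hp.1)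

lemma summable_lconv {G : Type*} [Group G] {μ p : G → ℝ} (hμ : IsProb μ) (hp : IsProb p)
    (y : G) : Summable fun x => μ x * p (x⁻¹ * y) :=
  Summable.of_nonneg_of_le (fun x => mul_nonneg (hμ.1 x) (hp.1 _))
    (fun x => mul_le_of_le_one_right (hμ.1 x) (hp.le_one _)) hμ.2.summable

/-- Integration against `μ * p` from integration against the product `μ ⊗ p`. -/
lemma lconv_hasSum {G : Type*} [Group G] {μ p F : G → ℝ} (hμ : IsProb μ) (hp : IsProb p) {s : ℝ}
    (h : HasSum (fun q : G × G => μ q.1 * p q.2 * F (q.1 * q.2)) s) :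
    HasSum (fun y => lconv μ p y * F y) s := by
  rw [← (shear G).hasSum_iff] at h
  refine h.prod_fiberwise fun y => ?_
  simpa [shear, Function.comp_def, lconv] using
    ((summable_lconv hμ hp y).hasSum.mul_right (F y))

/-- The converse of `lconv_hasSum` for nonnegative integrands. -/
lemma lconv_summable {G : Type*} [Group G] {μ p F : G → ℝ} (hμ : IsProb μ) (hp : IsProb p)
    (hF : ∀ y, 0 ≤ F y) (h : Summable fun y => lconv μ p y * F y) :
    HasSum (fun q : G × G => μ q.1 * p q.2 * F (q.1 * q.2)) (∑' y, lconv μ p y * F y) := by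
  have hs : Summable (fun q : G × G => μ q.1 * p q.2 * F (q.1 * q.2)) := by
    rw [← (shear G).summable_iff, summable_prod_of_nonneg]
    · refine ⟨fun y => ?_, ?_⟩
      · simpa [shear, Function.comp_def] using ((summable_lconv hμ hp y).mul_right (F y))
      · simpa [shear, Function.comp_def, tsum_mul_right, lconv] using h
    · intro q
      exact mul_nonneg (mul_nonneg (hμ.1 _) (hp.1 _)) (hF _)
  rw [(lconv_hasSum hμ hp hs.hasSum).tsum_eq]
  exact hs.hasSum

lemma IsProb.lconv {G : Type*} [Group G] {μ p : G → ℝ} (hμ : IsProb μ) (hp : IsProb p) :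
    IsProb (lconv μ p) := by
  refine ⟨fun y => tsum_nonneg fun x => mul_nonneg (hμ.1 x) (hp.1 _), ?_⟩
  simpa using lconv_hasSum (F := fun _ => 1) hμ hp (by simpa using hμ.prod hp)

lemma le_lconv {G : Type*} [Group G] {μ p : G → ℝ} (hμ : IsProb μ) (hp : IsProb p) (x z : G) :
    μ x * p z ≤ lconv μ p (x * z) := by
  have := (summable_lconv hμ hp (x * z)).le_tsum x
    fun j _ => mul_nonneg (hμ.1 j) (hp.1 _)
  simpa [_root_.lconv] using this

/-- The pointwise form of the bound of the Hellinger distance by relative entropy. -/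
lemma sq_sqrt_sub_le {a b : ℝ} (ha : 0 ≤ a) (hb : 0 ≤ b) (hab : b = 0 → a = 0) :
    (√a - √b) ^ 2 ≤ -Real.negMulLog a + a * (-Real.log b) - a + b := by
  rcases ha.eq_or_lt with rfl | ha
  · simp [Real.sq_sqrt hb]
  have hb : 0 < b := lt_of_le_of_ne hb fun h => ha.ne' (hab h.symm)
  have hx := Real.sqrt_pos.2 ha
  have hy := Real.sqrt_pos.2 hb
  have hlog := Real.log_le_sub_one_of_pos (div_pos hy hx)
  rw [Real.log_div hy.ne' hx.ne', Real.log_sqrt ha.le, Real.log_sqrt hb.le] at hlog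
  have h2 := mul_le_mul_of_nonneg_left hlog (mul_pos hx hx).le
  have h3 : √a * √a * (√b / √a - 1) = √a * √b - √a * √a := by field_simp
  rw [h3, Real.mul_self_sqrt ha.le] at h2
  have h4 : (√a - √b) ^ 2 = a - 2 * (√a * √b) + b := by
    rw [sub_sq, Real.sq_sqrt ha.le, Real.sq_sqrt hb.le]; ring
  rw [h4, Real.negMulLog]
  linarith

/-- The entropy increment of one convolution step controls the Hellinger distance between
`p` and each left translate of `μ * p` by an atom of `μ`. -/
lemma hellinger_le {G : Type*} [Group G] {μ p : G → ℝ} (hμ : IsProb μ) (hp : IsProb p)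
    (h1 : Summable fun g => Real.negMulLog (p g))
    (h2 : Summable fun g => Real.negMulLog (lconv μ p g)) (x : G) (hx : 0 < μ x) :
    Summable (fun z => (√(p z) - √(lconv μ p (x * z))) ^ 2) ∧
    μ x * ∑' z, (√(p z) - √(lconv μ p (x * z))) ^ 2 ≤ entropy (lconv μ p) - entropy p := by
  have hr := hμ.lconv hp
  set r := lconv μ p with hrdef
  have e1 : HasSum (fun q : G × G => μ q.1 * Real.negMulLog (p q.2)) (entropy p) := by
    have hn : ∀ g, 0 ≤ Real.negMulLog (p g) := fun g =>
      Real.negMulLog_nonneg (hp.1 g) (hp.le_one g)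
    simpa [entropy] using hμ.2.mul h1.hasSum (hμ.2.summable.mul_of_nonneg h1 hμ.1 hn)
  have e2 : HasSum (fun q : G × G => μ q.1 * p q.2 * (-Real.log (r (q.1 * q.2)))) (entropy r) := by
    have := lconv_summable (F := fun y => -Real.log (r y)) hμ hp
      (fun y => neg_nonneg.2 (Real.log_nonpos (hr.1 y) (hr.le_one y)))
      (by simpa [Real.negMulLog] using h2)
    simpa [entropy, Real.negMulLog] using this
  have e3 := hμ.prod hp
  have e4 : HasSum (fun q : G × G => μ q.1 * r (q.1 * q.2)) 1 := by
    have h := hμ.prod hr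
    let e : G × G ≃ G × G :=
      { toFun := fun q => (q.1, q.1 * q.2), invFun := fun q => (q.1, q.1⁻¹ * q.2)
        left_inv := fun q => by simp
        right_inv := fun q => by simp }
    rw [← e.hasSum_iff] at h
    exact h
  have e5 := ((e1.neg.add e2).sub e3).add e4
  have hle : ∀ q : G × G, μ q.1 * (√(p q.2) - √(r (q.1 * q.2))) ^ 2 ≤
      -(μ q.1 * Real.negMulLog (p q.2)) + μ q.1 * p q.2 * (-Real.log (r (q.1 * q.2)))
        - μ q.1 * p q.2 + μ q.1 * r (q.1 * q.2) := by
    rintro ⟨x, z⟩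
    dsimp only
    rcases (hμ.1 x).eq_or_lt with h0 | h0
    · simp [← h0]
    · have := mul_le_mul_of_nonneg_left (sq_sqrt_sub_le (hp.1 z) (hr.1 (x * z)) (fun hb => by
        have h5 := le_lconv hμ hp x z
        rw [← hrdef, hb] at h5
        have h6 := hp.1 z
        by_contra hne
        have := mul_pos h0 (lt_of_le_of_ne h6 (Ne.symm hne))
        linarith)) h0.le
      linarith
  have hnn : ∀ q : G × G, 0 ≤ μ q.1 * (√(p q.2) - √(r (q.1 * q.2))) ^ 2 := fun q =>
    mul_nonneg (hμ.1 _) (sq_nonneg _)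
  have hs : Summable fun q : G × G => μ q.1 * (√(p q.2) - √(r (q.1 * q.2))) ^ 2 :=
    Summable.of_nonneg_of_le hnn hle e5.summable
  have hfib : Summable fun z => μ x * (√(p z) - √(r (x * z))) ^ 2 := hs.prod_factor x
  have hfib' : Summable (fun z => (√(p z) - √(r (x * z))) ^ 2) :=
    (summable_mul_left_iff hx.ne').1 hfib
  refine ⟨hfib', ?_⟩
  rw [← tsum_mul_left]
  have h7 : ∑' q : G × G, μ q.1 * (√(p q.2) - √(r (q.1 * q.2))) ^ 2 ≤ _ :=
    hasSum_le hle hs.hasSum e5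
  have h8 : ∑' z, μ x * (√(p z) - √(r (x * z))) ^ 2 ≤
      ∑' q : G × G, μ q.1 * (√(p q.2) - √(r (q.1 * q.2))) ^ 2 := by
    have := hs.prod.le_tsum x fun j _ => tsum_nonneg fun z => hnn (j, z)
    rwa [← hs.tsum_prod] at this
  linarith

/-- Cauchy–Schwarz in the form that compares total variation with Hellinger distance. -/
lemma l1_le {G : Type*} {p r : G → ℝ} (hp : IsProb p) (hr : IsProb r)
    (hs : Summable fun z => (√(p z) - √(r z)) ^ 2) {t : ℝ} (ht : 0 < t)
    (hK : ∑' z, (√(p z) - √(r z)) ^ 2 ≤ t ^ 2) :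
    ∑' z, |p z - r z| ≤ 3 * t := by
  have hle : ∀ z, |p z - r z| ≤ (2 * t)⁻¹ * (√(p z) - √(r z)) ^ 2 + t * (p z + r z) := by
    intro z
    have ha := Real.sqrt_nonneg (p z)
    have hb := Real.sqrt_nonneg (r z)
    have ha' := Real.sq_sqrt (hp.1 z)
    have hb' := Real.sq_sqrt (hr.1 z)
    rw [← ha', ← hb', Real.sqrt_sq ha, Real.sqrt_sq hb]
    set a := √(p z)
    set b := √(r z)
    have h1 : |a ^ 2 - b ^ 2| = |a - b| * (a + b) := by
      rw [sq_sub_sq, abs_mul, abs_of_nonneg (by positivity : 0 ≤ a + b)]; ring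
    rw [h1]
    have h2 : 2 * t * (|a - b| * (a + b)) ≤ (a - b) ^ 2 + 2 * t * (t * (a ^ 2 + b ^ 2)) := by
      have := sq_nonneg (|a - b| - t * (a + b))
      have h3 := sq_abs (a - b)
      have h4 := mul_nonneg (sq_nonneg t) (sq_nonneg (a - b))
      nlinarith
    have h5 := mul_le_mul_of_nonneg_left h2 (by positivity : 0 ≤ (2 * t)⁻¹)
    rw [inv_mul_cancel_left₀ (by positivity), mul_add (2 * t)⁻¹,
      inv_mul_cancel_left₀ (by positivity)] at h5
    exact h5
  have hsum := (hs.hasSum.mul_left (2 * t)⁻¹).add ((hp.2.add hr.2).mul_left t)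
  have habs : Summable fun z => |p z - r z| := (hp.2.summable.sub hr.2.summable).abs
  have h6 := hasSum_le hle habs.hasSum hsum
  have h7 := mul_le_mul_of_nonneg_left hK (by positivity : 0 ≤ (2 * t)⁻¹)
  have h8 : (2 * t)⁻¹ * t ^ 2 = t / 2 := by field_simp
  rw [h8] at h7
  linarith

/-- Gibbs' inequality against the density `(1 + w)^(-B)`, with the concave logarithm replaced by
its tangent line at the free parameter `s`. -/
lemma entropy_le {G : Type*} {p w : G → ℝ} (hp : IsProb p) (hw : ∀ g, 0 ≤ w g)
    {B s : ℝ} (hB : 0 ≤ B) (hs : 0 < s)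
    (hq : Summable fun g => (1 + w g) ^ (-B)) (hm : Summable fun g => p g * w g) :
    Summable (fun g => Real.negMulLog (p g)) ∧
    entropy p ≤ B * (Real.log s + (1 + ∑' g, p g * w g) / s) + ∑' g, (1 + w g) ^ (-B) := by
  have hle : ∀ g, Real.negMulLog (p g) ≤
      B * (p g * Real.log s + (p g + p g * w g) / s) + (1 + w g) ^ (-B) := by
    intro g
    have hw1 : 0 < 1 + w g := by linarith [hw g]
    have hqp : 0 < (1 + w g) ^ (-B) := Real.rpow_pos_of_pos hw1 _
    have h1 := sq_sqrt_sub_le (hp.1 g) hqp.le (fun h => absurd h hqp.ne')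
    rw [Real.log_rpow hw1] at h1
    have h2 := Real.log_le_sub_one_of_pos (div_pos hw1 hs)
    rw [Real.log_div hw1.ne' hs.ne'] at h2
    have h3 : Real.log (1 + w g) ≤ Real.log s + (1 + w g) / s := by linarith
    have h4 := mul_le_mul_of_nonneg_left h3 (mul_nonneg hB (hp.1 g))
    have h5 : B * (p g * Real.log s + (p g + p g * w g) / s) =
      B * p g * (Real.log s + (1 + w g) / s) := by ring
    have h6 := sq_nonneg (√(p g) - √((1 + w g) ^ (-B)))
    have h7 := hp.1 g
    rw [h5]
    linarith
  have hsum := ((((hp.2.mul_right (Real.log s)).add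
    ((hp.2.add hm.hasSum).div_const s)).mul_left B).add hq.hasSum)
  have hS : Summable (fun g => Real.negMulLog (p g)) :=
    Summable.of_nonneg_of_le (fun g => Real.negMulLog_nonneg (hp.1 g) (hp.le_one g)) hle
      hsum.summable
  refine ⟨hS, ?_⟩
  simpa [entropy] using hasSum_le hle hS.hasSum hsum

/-! ### The entropy criterion for the Liouville property -/

/-- The left convolution powers `μ^{*n}`, starting from the point mass at the identity. -/
def lpow {G : Type*} [Group G] (μ : G → ℝ) : ℕ → G → ℝ
  | 0 => Pi.single 1 1
  | n + 1 => lconv μ (lpow μ n)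

lemma isProb_lpow {G : Type*} [Group G] {μ : G → ℝ} (hμ : IsProb μ) (n : ℕ) :
    IsProb (lpow μ n) := by
  induction n with
  | zero =>
    refine ⟨fun g => ?_, hasSum_pi_single 1 1⟩
    by_cases h : g = 1 <;> simp [lpow, h]
  | succ n ih => exact hμ.lconv ih

/-- The first moment of a subadditive weight grows at most linearly along the random walk. -/
lemma moment_lpow {G : Type*} [Group G] {μ w : G → ℝ} (hμ : IsProb μ) (hw : ∀ g, 0 ≤ w g)
    (hsub : ∀ g h, w (g * h) ≤ w g + w h) (hm : Summable fun g => μ g * w g) (n : ℕ) :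
    Summable (fun g => lpow μ n g * w g) ∧
      ∑' g, lpow μ n g * w g ≤ w 1 + n * ∑' g, μ g * w g := by
  induction n with
  | zero =>
    have h : HasSum (fun g => lpow μ 0 g * w g) (w 1) := by
      convert hasSum_single (f := fun g => lpow μ 0 g * w g) 1 ?_ using 1
      · simp [lpow]
      · intro b hb
        simp [lpow, hb]
    exact ⟨h.summable, by simp [h.tsum_eq]⟩
  | succ n ih =>
    have hp := isProb_lpow hμ n
    set p := lpow μ n
    have hmn : ∀ g, 0 ≤ μ g * w g := fun g => mul_nonneg (hμ.1 g) (hw g)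
    have hpn : ∀ g, 0 ≤ p g * w g := fun g => mul_nonneg (hp.1 g) (hw g)
    have a1 := hm.hasSum.mul hp.2 (hm.mul_of_nonneg hp.2.summable hmn hp.1)
    have a2 := hμ.2.mul ih.1.hasSum (hμ.2.summable.mul_of_nonneg ih.1 hμ.1 hpn)
    have a3 := a1.add a2
    have hle : ∀ q : G × G, μ q.1 * p q.2 * w (q.1 * q.2) ≤
        μ q.1 * w q.1 * p q.2 + μ q.1 * (p q.2 * w q.2) := fun q => by
      have := mul_le_mul_of_nonneg_left (hsub q.1 q.2) (mul_nonneg (hμ.1 q.1) (hp.1 q.2))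
      linarith
    have hs : Summable fun q : G × G => μ q.1 * p q.2 * w (q.1 * q.2) :=
      Summable.of_nonneg_of_le
        (fun q => mul_nonneg (mul_nonneg (hμ.1 _) (hp.1 _)) (hw _)) hle a3.summable
    have h1 := lconv_hasSum hμ hp hs.hasSum
    refine ⟨h1.summable, ?_⟩
    have h2 := hasSum_le hle hs.hasSum a3
    change ∑' g, lconv μ p g * w g ≤ _
    rw [h1.tsum_eq]
    push_cast
    linarith [ih.2]

lemma IsProb.summable_bdd {G : Type*} {p v : G → ℝ} (hp : IsProb p) {M : ℝ}
    (hv : ∀ g, |v g| ≤ M) : Summable fun g => p g * v g :=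
  Summable.of_norm_bounded (hp.2.summable.mul_right M) fun g => by
    rw [Real.norm_eq_abs, abs_mul, abs_of_nonneg (hp.1 g)]
    exact mul_le_mul_of_nonneg_left (hv g) (hp.1 g)

/-- A bounded harmonic function is also harmonic for every convolution power. -/
lemma harmonic_lpow {G : Type*} [Group G] {μ u : G → ℝ} (hμ : IsProb μ) {M : ℝ}
    (hu : ∀ g, |u g| ≤ M) (hh : ∀ x, u x = ∑' y, u (x * y) * μ y) (n : ℕ) (g : G) :
    HasSum (fun y => lpow μ n y * u (g * y)) (u g) := by
  induction n generalizing g with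
  | zero =>
    convert hasSum_single (f := fun y => lpow μ 0 y * u (g * y)) 1 ?_ using 1
    · simp [lpow]
    · intro b hb
      simp [lpow, hb]
  | succ n ih =>
    have hp := isProb_lpow hμ n
    refine lconv_hasSum (F := fun y => u (g * y)) hμ hp ?_
    have hs : Summable fun q : G × G => μ q.1 * lpow μ n q.2 * u (g * (q.1 * q.2)) :=
      IsProb.summable_bdd (p := fun q : G × G => μ q.1 * lpow μ n q.2)
        ⟨fun q => mul_nonneg (hμ.1 _) (hp.1 _), hμ.prod hp⟩ fun q => hu _
    have h1 : HasSum (fun x => μ x * u (g * x))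
        (∑' q : G × G, μ q.1 * lpow μ n q.2 * u (g * (q.1 * q.2))) :=
      hs.hasSum.prod_fiberwise fun x => by
        simpa [mul_assoc] using (ih (g * x)).mul_left (μ x)
    have h2 : u g = ∑' q : G × G, μ q.1 * lpow μ n q.2 * u (g * (q.1 * q.2)) := by
      rw [← h1.tsum_eq, hh g]
      exact tsum_congr fun x => mul_comm _ _
    rw [h2]
    exact hs.hasSum

/-- Avez–Kaimanovich–Vershik: a measure with a finite first moment for a subadditive weight `w`
such that `(1 + w)^(-B)` is summable has vanishing asymptotic entropy, and hence only constant
bounded harmonic functions. -/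
theorem liouville_of_moment {G : Type*} [Group G] {μ w : G → ℝ} (hμ : IsProb μ)
    (hgen : Subgroup.closure {g | 0 < μ g} = ⊤) (hw : ∀ g, 0 ≤ w g)
    (hsub : ∀ g h, w (g * h) ≤ w g + w h) (hm : Summable fun g => μ g * w g)
    {B : ℝ} (hB : 0 ≤ B) (hq : Summable fun g => (1 + w g) ^ (-B))
    {u : G → ℝ} {M : ℝ} (hu : ∀ g, |u g| ≤ M) (hh : ∀ x, u x = ∑' y, u (x * y) * μ y)
    (x y : G) : u x = u y := by
  have hM : 0 ≤ M := (abs_nonneg _).trans (hu 1)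
  have hent : ∀ n, Summable fun g => Real.negMulLog (lpow μ n g) := fun n =>
    (entropy_le (isProb_lpow hμ n) hw hB one_pos hq (moment_lpow hμ hw hsub hm n).1).1
  -- The entropies grow sublinearly, so some increment is small.
  have hinc : ∀ δ : ℝ, 0 < δ → ∃ n, entropy (lpow μ (n + 1)) - entropy (lpow μ n) < δ := by
    intro δ hδ
    by_contra! hcon
    have hlow : ∀ n : ℕ, n * δ ≤ entropy (lpow μ n) := by
      intro n
      induction n with
      | zero =>
        simpa [entropy] using tsum_nonneg fun g => Real.negMulLog_nonneg
          ((isProb_lpow hμ 0).1 g) ((isProb_lpow hμ 0).le_one g)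
      | succ n ih => push_cast; linarith [hcon n]
    set m := ∑' g, μ g * w g
    have hm0 : 0 ≤ m := tsum_nonneg fun g => mul_nonneg (hμ.1 g) (hw g)
    -- With this `s` the entropy bound has slope at most `δ / 2` in `n`.
    set s := 2 * (B * m + 1) / δ with hs
    have hs0 : 0 < s := by positivity
    have hslope : B * m / s ≤ δ / 2 := by
      rw [div_le_iff₀ hs0, hs]
      have : δ / 2 * (2 * (B * m + 1) / δ) = B * m + 1 := by field_simp
      linarith
    set K := B * (Real.log s + (1 + w 1) / s) + ∑' g, (1 + w g) ^ (-B)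
    obtain ⟨n, hn⟩ := exists_nat_gt (K / (δ / 2))
    rw [div_lt_iff₀ (by positivity)] at hn
    have hmn := moment_lpow hμ hw hsub hm n
    have h1 := (entropy_le (isProb_lpow hμ n) hw hB hs0 hq hmn.1).2
    have h2 : B * ((1 + ∑' g, lpow μ n g * w g) / s) ≤ B * ((1 + (w 1 + n * m)) / s) := by
      have := hmn.2
      gcongr
    have h3 : B * ((1 + (w 1 + n * m)) / s) = B * ((1 + w 1) / s) + n * (B * m / s) := by ring
    have h4 := mul_le_mul_of_nonneg_left hslope (Nat.cast_nonneg (α := ℝ) n)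
    have h5 := hlow n
    have h6 : K = B * Real.log s + B * ((1 + w 1) / s) + ∑' g, (1 + w g) ^ (-B) := by
      simp only [K]; ring
    linarith
  have hkey : ∀ x, 0 < μ x → ∀ g, u (g * x) = u g := by
    intro x hx g
    have hbound : ∀ t : ℝ, 0 < t → |u (g * x) - u g| ≤ 3 * M * t := by
      intro t ht
      obtain ⟨n, hn⟩ := hinc (μ x * t ^ 2) (by positivity)
      have hp := isProb_lpow hμ n
      have hr := isProb_lpow hμ (n + 1)
      obtain ⟨hS, hK⟩ := hellinger_le hμ hp (hent n) (hent (n + 1)) x hx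
      have hK' := lt_of_mul_lt_mul_left (hK.trans_lt hn) hx.le
      have hr' : IsProb fun z => lpow μ (n + 1) (x * z) :=
        ⟨fun z => hr.1 _, (Equiv.mulLeft x).hasSum_iff.2 hr.2⟩
      have hl1 := l1_le hp hr' hS ht hK'.le
      have e1 := harmonic_lpow hμ hu hh n (g * x)
      have e2 := (Equiv.mulLeft x).hasSum_iff.2 (harmonic_lpow hμ hu hh (n + 1) g)
      have e3 := e1.sub e2
      have habs : Summable fun z => |lpow μ n z - lpow μ (n + 1) (x * z)| :=
        (hp.2.summable.sub hr'.2.summable).abs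
      have hle : ∀ z, ‖lpow μ n z * u (g * x * z) -
          ((fun y => lpow μ (n + 1) y * u (g * y)) ∘ (Equiv.mulLeft x)) z‖ ≤
          |lpow μ n z - lpow μ (n + 1) (x * z)| * M := by
        intro z
        have : lpow μ n z * u (g * x * z) -
          ((fun y => lpow μ (n + 1) y * u (g * y)) ∘ (Equiv.mulLeft x)) z =
          (lpow μ n z - lpow μ (n + 1) (x * z)) * u (g * x * z) := by
          simp only [Function.comp, Equiv.coe_mulLeft, mul_assoc]; ring
        rw [this, norm_mul, Real.norm_eq_abs, Real.norm_eq_abs]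
        exact mul_le_mul_of_nonneg_left (hu _) (abs_nonneg _)
      have h9 := tsum_of_norm_bounded (habs.hasSum.mul_right M) hle
      rw [e3.tsum_eq, Real.norm_eq_abs] at h9
      have := mul_le_mul_of_nonneg_right hl1 hM
      linarith
    have h0 : |u (g * x) - u g| ≤ 0 := by
      refine le_of_forall_pos_le_add fun ε hε => ?_
      have h1 := hbound (ε / (3 * M + 1)) (by positivity)
      have h2 : 3 * M * (ε / (3 * M + 1)) ≤ ε := by
        rw [← mul_div_assoc, div_le_iff₀ (by positivity)]
        linarith
      linarith
    exact sub_eq_zero.1 (abs_nonpos_iff.1 h0)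
  have hall : ∀ h : G, ∀ g, u (g * h) = u g := by
    intro h
    have hmem : h ∈ Subgroup.closure {g | 0 < μ g} := hgen ▸ Subgroup.mem_top h
    induction hmem using Subgroup.closure_induction with
    | mem z hz => exact hkey z hz
    | one => simp
    | mul a b _ _ ha hb => intro g; rw [← mul_assoc, hb, ha]
    | inv a _ ha => intro g; rw [← ha (g * a⁻¹), inv_mul_cancel_right]
  rw [← hall (x⁻¹ * y) x, mul_inv_cancel_left]

/-! ### Word length -/

lemma exists_word {G : Type*} [Group G] {S : Set G} (hS : ∀ s ∈ S, s⁻¹ ∈ S) {g : G}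
    (hg : g ∈ Subgroup.closure S) :
    ∃ l : List G, l.length = wordLength S g ∧ (∀ x ∈ l, x ∈ S) ∧ l.prod = g := by
  have h : ∃ l : List G, (∀ x ∈ l, x ∈ S) ∧ l.prod = g := by
    induction hg using Subgroup.closure_induction with
    | mem z hz => exact ⟨[z], by simpa using hz, by simp⟩
    | one => exact ⟨[], by simp, by simp⟩
    | mul a b _ _ ha hb =>
      obtain ⟨l, hl, rfl⟩ := ha
      obtain ⟨l', hl', rfl⟩ := hb
      refine ⟨l ++ l', fun x hx => ?_, by simp⟩
      rcases List.mem_append.1 hx with hx | hx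
      exacts [hl x hx, hl' x hx]
    | inv a _ ha =>
      obtain ⟨l, hl, rfl⟩ := ha
      refine ⟨(l.map fun x => x⁻¹).reverse, fun x hx => ?_, by rw [List.prod_inv_reverse]⟩
      obtain ⟨y, hy, rfl⟩ := List.mem_map.1 (List.mem_reverse.1 hx)
      exact hS y (hl y hy)
  obtain ⟨l, hl, hp⟩ := h
  exact Nat.sInf_mem (s := { n : ℕ | ∃ l : List G, l.length = n ∧ (∀ x ∈ l, x ∈ S) ∧ l.prod = g })
    ⟨l.length, l, rfl, hl, hp⟩

lemma wordLength_prod_le {G : Type*} [Group G] {S : Set G} {l : List G} (hl : ∀ x ∈ l, x ∈ S) :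
    wordLength S l.prod ≤ l.length :=
  Nat.sInf_le ⟨l, rfl, hl, rfl⟩

lemma wordLength_mul_le {G : Type*} [Group G] {S : Set G} (hS : ∀ s ∈ S, s⁻¹ ∈ S)
    (hgen : Subgroup.closure S = ⊤) (g h : G) :
    wordLength S (g * h) ≤ wordLength S g + wordLength S h := by
  obtain ⟨l, hl, hlS, rfl⟩ := exists_word hS (g := g) (hgen ▸ Subgroup.mem_top g)
  obtain ⟨l', hl', hlS', rfl⟩ := exists_word hS (g := h) (hgen ▸ Subgroup.mem_top h)
  rw [← hl, ← hl', ← List.length_append, ← List.prod_append]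
  refine wordLength_prod_le fun x hx => ?_
  rcases List.mem_append.1 hx with hx | hx
  exacts [hlS x hx, hlS' x hx]

/-- The word length of a finitely generated subgroup dominates that of the ambient group. -/
lemma exists_wordLength_le {G : Type*} [Group G] {T : Set G} (hT : ∀ s ∈ T, s⁻¹ ∈ T)
    (hgen : Subgroup.closure T = ⊤) (S : Finset G) (hS : ∀ s ∈ S, s⁻¹ ∈ S) :
    ∃ K : ℕ, ∀ h ∈ Subgroup.closure (S : Set G),
      wordLength T h ≤ K * wordLength (S : Set G) h := by
  refine ⟨∑ s ∈ S, wordLength T s, fun h hh => ?_⟩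
  obtain ⟨l, hl, hlS, rfl⟩ := exists_word (S := (S : Set G)) (by simpa using hS) hh
  rw [← hl]
  clear hl hh
  induction l with
  | nil => simpa using wordLength_prod_le (S := T) (l := []) (by simp)
  | cons a l ih =>
    have h1 := wordLength_mul_le hT hgen a l.prod
    have h2 := ih fun x hx => hlS x (List.mem_cons_of_mem _ hx)
    have h3 : wordLength T a ≤ ∑ s ∈ S, wordLength T s :=
      Finset.single_le_sum (f := fun s => wordLength T s) (fun _ _ => Nat.zero_le _)
        (by simpa using hlS a List.mem_cons_self)
    rw [List.prod_cons, List.length_cons, mul_add, mul_one]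
    omega

/-! ### Summation over dyadic shells -/

/-- If the balls of `H` grow like `r ^ d` and `f` is bounded by `t ^ (-d)` times a geometric factor
in the index of the dyadic shell of `t = 1 + ℓ`, then `f` is summable. The lower bound `c * r ^ d`
is used only to know that the balls are finite. -/
lemma summable_of_shell {G : Type*} (H : Set G) (ℓ : G → ℕ) {f : G → ℝ} (hf : ∀ g, 0 ≤ f g)
    (h0 : ∀ g, g ∉ H → f g = 0) {c C d : ℝ} (hc : 0 < c)
    (hgrow : ∀ r : ℝ, 1 ≤ r → c * r ^ d ≤ (({h | h ∈ H ∧ (ℓ h : ℝ) ≤ r}).ncard : ℝ) ∧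
      (({h | h ∈ H ∧ (ℓ h : ℝ) ≤ r}).ncard : ℝ) ≤ C * r ^ d)
    {A ρ : ℝ} (hA : 0 ≤ A) (hρ0 : 0 ≤ ρ) (hρ1 : ρ < 1)
    (hb : ∀ h ∈ H, f h ≤ A * ρ ^ Nat.log 2 (1 + ℓ h) * (1 + (ℓ h : ℝ)) ^ (-d)) :
    Summable f := by
  have hC : 0 ≤ C := by
    have := hgrow 1 le_rfl
    simp only [Real.one_rpow, mul_one] at this
    linarith
  set L : G → ℕ := fun g => Nat.log 2 (1 + ℓ g) with hL
  have hfib : ∀ (u : Finset G) (k : ℕ),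
      ∑ g ∈ u with L g = k, f g ≤ C * A * 2 ^ |d| * ρ ^ k := by
    intro u k
    set T : ℝ := 2 ^ (k + 1) with hT
    have hT1 : 1 ≤ T := one_le_pow₀ (by norm_num)
    have hT0 : 0 < T := by linarith
    have e1 : ∑ g ∈ u with L g = k, f g = ∑ g ∈ (u.filter fun g => L g = k) with g ∈ H, f g := by
      refine (Finset.sum_filter_of_ne ?_).symm
      intro g _ hne
      by_contra hg
      exact hne (h0 g hg)
    have hup : ∀ g, L g = k → 1 + (ℓ g : ℝ) ≤ T := by
      intro g hg
      have := Nat.lt_pow_succ_log_self (b := 2) (by norm_num) (1 + ℓ g)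
      rw [show Nat.log 2 (1 + ℓ g) = k from hg] at this
      rw [hT]
      exact_mod_cast this.le
    have hlow : ∀ g, L g = k → T ≤ 2 * (1 + (ℓ g : ℝ)) := by
      intro g hg
      have := Nat.pow_log_le_self 2 (x := 1 + ℓ g) (by omega)
      rw [show Nat.log 2 (1 + ℓ g) = k from hg] at this
      have h2 : (2 : ℝ) ^ k ≤ 1 + (ℓ g : ℝ) := by exact_mod_cast this
      rw [hT, pow_succ]
      linarith
    have hpt : ∀ g ∈ (u.filter fun g => L g = k).filter (fun g => g ∈ H),
        f g ≤ A * ρ ^ k * (2 ^ |d| * T ^ (-d)) := by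
      intro g hg
      simp only [Finset.mem_filter] at hg
      obtain ⟨⟨_, hk⟩, hgH⟩ := hg
      have h1 := hb g hgH
      rw [show Nat.log 2 (1 + ℓ g) = k from hk] at h1
      refine h1.trans (mul_le_mul_of_nonneg_left ?_ (by positivity))
      set t : ℝ := 1 + (ℓ g : ℝ) with ht
      have ht0 : 0 < t := by positivity
      have h2 : (T / t) ^ d ≤ 2 ^ |d| := by
        have hq : 1 ≤ T / t := by rw [one_le_div ht0]; exact hup g hk
        refine (Real.rpow_le_rpow_of_exponent_le hq (le_abs_self d)).trans ?_
        refine Real.rpow_le_rpow (by linarith) ?_ (abs_nonneg d)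
        rw [div_le_iff₀ ht0]
        exact hlow g hk
      rw [Real.div_rpow hT0.le ht0.le] at h2
      have hTd := Real.rpow_pos_of_pos hT0 d
      rw [Real.rpow_neg ht0.le, Real.rpow_neg hT0.le, ← div_eq_mul_inv, le_div_iff₀ hTd,
        mul_comm, ← div_eq_mul_inv]
      exact h2
    have hcard : (((u.filter fun g => L g = k).filter (fun g => g ∈ H)).card : ℝ) ≤ C * T ^ d := by
      have hg := hgrow T hT1
      refine le_trans ?_ hg.2
      have hfin : ({h | h ∈ H ∧ (ℓ h : ℝ) ≤ T}).Finite := by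
        refine Set.finite_of_ncard_pos ?_
        have : 0 < c * T ^ d := mul_pos hc (Real.rpow_pos_of_pos hT0 d)
        exact_mod_cast this.trans_le hg.1
      rw [← Set.ncard_coe_finset]
      refine Nat.cast_le.2 (Set.ncard_le_ncard ?_ hfin)
      intro g hg
      simp only [Finset.coe_filter, Finset.mem_filter, Set.mem_ofPred_eq] at hg ⊢
      exact ⟨hg.2, by linarith [hup g hg.1.2]⟩
    rw [e1]
    refine (Finset.sum_le_card_nsmul _ _ _ hpt).trans ?_
    rw [nsmul_eq_mul]
    refine (mul_le_mul_of_nonneg_right hcard (by positivity)).trans (le_of_eq ?_)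
    rw [Real.rpow_neg hT0.le]
    have := (Real.rpow_pos_of_pos hT0 d).ne'
    field_simp
  have hgeo := (summable_geometric_of_lt_one hρ0 hρ1).mul_left (C * A * 2 ^ |d|)
  refine summable_of_sum_le (c := ∑' k, C * A * 2 ^ |d| * ρ ^ k) hf fun u => ?_
  rw [← Finset.sum_fiberwise_of_maps_to (t := u.image L)
    (fun g hg => Finset.mem_image_of_mem L hg)]
  refine (Finset.sum_le_sum fun k _ => hfib u k).trans ?_
  exact hgeo.sum_le_tsum _ fun k _ => by positivity

/-- Regular variation of positive index forces geometric growth along powers of two. -/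
lemma exists_geom_le {φ : ℝ → ℝ} (hpos : ∀ t, 0 ≤ t → 0 < φ t) (hmono : MonotoneOn φ (Set.Ici 0))
    {γ : ℝ} (hγ : 0 < γ) (hreg : RegVaryAt φ γ) :
    ∃ c b : ℝ, 0 < c ∧ 1 < b ∧ ∀ k : ℕ, c * b ^ k ≤ φ (2 ^ k) := by
  obtain ⟨b, hb1, hb2⟩ := exists_between (Real.one_lt_rpow (x := 2) (by norm_num) hγ)
  have hev := (hreg 2 (by norm_num)).eventually (lt_mem_nhds hb2)
  have hev2 := (tendsto_pow_atTop_atTop_of_one_lt (r := (2 : ℝ)) (by norm_num)).eventually hev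
  obtain ⟨k0, hk0⟩ := Filter.eventually_atTop.1 hev2
  have hb0 : 0 < b := by linarith
  have hφ1 : 0 < φ 1 := hpos 1 (by norm_num)
  refine ⟨φ 1 / b ^ k0, b, by positivity, hb1, fun k => ?_⟩
  rw [div_mul_eq_mul_div, div_le_iff₀ (by positivity)]
  have hbase : ∀ k : ℕ, φ 1 ≤ φ (2 ^ k) := fun k =>
    hmono (by simp) (by simp) (one_le_pow₀ (by norm_num))
  induction k with
  | zero =>
    have := mul_le_mul_of_nonneg_left (one_le_pow₀ hb1.le : 1 ≤ b ^ k0) hφ1.le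
    simpa using this
  | succ k ih =>
    rcases le_or_gt k0 k with h | h
    · have h1 := hk0 k h
      rw [lt_div_iff₀ (hpos _ (by positivity)), ← pow_succ'] at h1
      calc φ 1 * b ^ (k + 1) = b * (φ 1 * b ^ k) := by ring
        _ ≤ b * (φ (2 ^ k) * b ^ k0) := by gcongr
        _ = (b * φ (2 ^ k)) * b ^ k0 := by ring
        _ ≤ φ (2 ^ (k + 1)) * b ^ k0 := by gcongr
    · exact mul_le_mul (hbase _) (pow_le_pow_right₀ hb1.le h) (by positivity)
        (hpos _ (by positivity)).le

/-- Each long-range component of `μ` has finite moments of all small positive orders. -/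
lemma moment_component {G : Type*} [Group G] {μ : G → ℝ} (D : PGRegData μ) (i : Fin D.k)
    {T : Set G} (hT : ∀ s ∈ T, s⁻¹ ∈ T) (hgen : Subgroup.closure T = ⊤) :
    ∀ᶠ α in nhdsWithin (0 : ℝ) (Set.Ioi 0),
      Summable fun g => D.μi i g * (1 + (wordLength T g : ℝ)) ^ α := by
  obtain ⟨γ, hγ, hreg⟩ := D.φ_reg i
  obtain ⟨c1, b, hc1, hb1, hφ⟩ := exists_geom_le (D.φ_pos i) (D.φ_mono i) hγ hreg
  obtain ⟨K, hK⟩ := exists_wordLength_le hT hgen (D.S i) (D.S_symm i)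
  obtain ⟨c, C, hc, -, hgrow⟩ := D.growth i
  obtain ⟨c', C', hc', hcC', hcomp⟩ := D.μi_comp i
  have hcont : Filter.Tendsto (fun α : ℝ => (2 : ℝ) ^ α) (nhdsWithin 0 (Set.Ioi 0)) (nhds 1) := by
    have := (Real.continuous_const_rpow (a := 2) (by norm_num)).tendsto 0
    rw [Real.rpow_zero] at this
    exact this.mono_left nhdsWithin_le_nhds
  filter_upwards [hcont.eventually (gt_mem_nhds hb1), self_mem_nhdsWithin] with α hα hα0
  have hα0 : 0 < α := hα0
  have hb0 : 0 < b := by linarith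
  have hμn := (D.μi_symm i).1
  refine summable_of_shell (D.Hsub i : Set G) (wordLength (D.S i : Set G)) (c := c) (C := C)
    (d := D.d i) (A := C' * ((1 + K) ^ α * 2 ^ α) / c1) (ρ := 2 ^ α / b)
    (fun g => mul_nonneg (hμn g) (by positivity))
    (fun g hg => by rw [D.μi_supp i g hg, zero_mul]) hc hgrow
    (div_nonneg (mul_nonneg (hc'.le.trans hcC') (by positivity)) hc1.le) (by positivity)
    ((div_lt_one hb0).2 hα) ?_
  intro h hh
  set n := wordLength (D.S i : Set G) h with hn
  set k := Nat.log 2 (1 + n) with hk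
  set t : ℝ := 1 + (n : ℝ) with ht
  have ht0 : 0 < t := by positivity
  have hlow : (2 : ℝ) ^ k ≤ t := by
    have := Nat.pow_log_le_self 2 (x := 1 + n) (by omega)
    rw [ht]; exact_mod_cast this
  have hup : t ≤ 2 ^ k * 2 := by
    have := Nat.lt_pow_succ_log_self (b := 2) (by norm_num) (1 + n)
    rw [ht, ← pow_succ]; exact_mod_cast this.le
  have hφt : c1 * b ^ k ≤ D.φ i t :=
    (hφ k).trans (D.φ_mono i (by simp) ht0.le hlow)
  have hφ0 : 0 < c1 * b ^ k := by positivity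
  have htd := Real.rpow_pos_of_pos ht0 (D.d i)
  have h1 : D.μi i h ≤ C' / (c1 * b ^ k) * t ^ (-D.d i) := by
    have h2 := (hcomp h hh).2
    rw [Real.rpow_neg ht0.le, ← div_eq_mul_inv, le_div_iff₀ htd, le_div_iff₀ hφ0]
    refine le_trans ?_ h2
    calc D.μi i h * t ^ D.d i * (c1 * b ^ k) ≤ D.μi i h * t ^ D.d i * D.φ i t :=
          mul_le_mul_of_nonneg_left hφt (mul_nonneg (hμn h) htd.le)
      _ = _ := by ring
  have h3 : (1 + (wordLength T h : ℝ)) ^ α ≤ (1 + K) ^ α * 2 ^ α * (2 ^ α) ^ k := by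
    have h4 : (wordLength T h : ℝ) ≤ K * n := by
      exact_mod_cast hK h (by rw [D.S_gen i]; exact hh)
    have h5 : 1 + (wordLength T h : ℝ) ≤ (1 + K) * 2 * 2 ^ k := by
      have : (0 : ℝ) ≤ n := Nat.cast_nonneg n
      calc 1 + (wordLength T h : ℝ) ≤ (1 + K) * t := by
            rw [ht]; nlinarith [Nat.cast_nonneg (α := ℝ) K]
        _ ≤ (1 + K) * (2 ^ k * 2) := by gcongr
        _ = _ := by ring
    refine (Real.rpow_le_rpow (by positivity) h5 hα0.le).trans (le_of_eq ?_)
    rw [Real.mul_rpow (by positivity) (by positivity), Real.mul_rpow (by positivity) (by norm_num),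
      ← Real.rpow_natCast, ← Real.rpow_natCast, ← Real.rpow_mul (by norm_num),
      ← Real.rpow_mul (by norm_num), mul_comm (k : ℝ)]
  refine (mul_le_mul h1 h3 (by positivity) ((hμn h).trans h1)).trans (le_of_eq ?_)
  rw [div_pow]
  field_simp

/-- the weak Liouville property -- every bounded `μ`-harmonic function
is constant, for `μ ∈ P_⪯(G,reg)` on a group of polynomial volume growth. -/
theorem stmt14 {G : Type*} [Group G] [Countable G]
    (hG : HasPolyGrowth G) (μ : G → ℝ) (hμ : IsSymmProb μ)
    (hreg : MemPGRegOrd μ) :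
    ∀ u : G → ℝ, (∃ M : ℝ, ∀ x : G, |u x| ≤ M) →
      (∀ x : G, u x = ∑' y : G, u (x * y) * μ y) →
      ∀ x y : G, u x = u y := by
  rintro u ⟨M, hu⟩ hh
  obtain ⟨T, d, c, C, hT, hgen, hc, -, hgrow⟩ := hG
  obtain ⟨D, -⟩ := hreg
  have hT' : ∀ s ∈ (T : Set G), s⁻¹ ∈ (T : Set G) := by simpa using hT
  have hev := Filter.eventually_all.2 fun i => moment_component D i hT' hgen
  have hsmall : ∀ᶠ α in nhdsWithin (0 : ℝ) (Set.Ioi 0), α < 1 :=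
    nhdsWithin_le_nhds (gt_mem_nhds one_pos)
  obtain ⟨α, ⟨hmom, hα1⟩, hα0⟩ := ((hev.and hsmall).and self_mem_nhdsWithin).exists
  have hα0 : 0 < α := hα0
  set ℓ := wordLength (T : Set G)
  have hprob : IsProb μ := ⟨hμ.1, hμ.2.2.1 ▸ hμ.2.1.hasSum⟩
  have hsupp : Subgroup.closure {g | 0 < μ g} = ⊤ := by
    obtain ⟨ε, hε, -, hcl, -⟩ := D.eps_gen
    exact top_le_iff.1 (hcl ▸ Subgroup.closure_mono fun g (hg : ε < μ g) => hε.trans hg)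
  refine liouville_of_moment (w := fun g => (1 + (ℓ g : ℝ)) ^ α) (B := (|d| + 1) / α) hprob hsupp
    (fun g => by positivity) ?_ ?_ (by positivity) ?_ hu hh
  · intro g h
    refine le_trans ?_ (Real.rpow_add_le_add_rpow (by positivity) (by positivity) hα0.le hα1.le)
    refine Real.rpow_le_rpow (by positivity) ?_ hα0.le
    have : (ℓ (g * h) : ℝ) ≤ ℓ g + ℓ h := by exact_mod_cast wordLength_mul_le hT' hgen g h
    linarith
  · have h0 : Summable fun g => D.μ0 g * (1 + (ℓ g : ℝ)) ^ α :=
      summable_of_hasFiniteSupport (D.μ0_fin.subset (Function.support_mul_subset_left _ _))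
    have hs := (h0.mul_left D.p0).add (summable_sum (s := Finset.univ)
      fun i _ => (hmom i).mul_left (D.p i))
    refine hs.congr fun g => ?_
    rw [D.μ_eq g, add_mul, Finset.sum_mul]
    simp only [mul_assoc]
  · refine summable_of_shell Set.univ ℓ (c := c) (C := C) (d := d) (A := 1) (ρ := 1 / 2)
      (fun g => by positivity) (fun g hg => absurd (Set.mem_univ g) hg) hc
      (by simpa using hgrow) zero_le_one (by norm_num) (by norm_num) ?_
    intro g _
    set t : ℝ := 1 + (ℓ g : ℝ) with ht
    have ht1 : 1 ≤ t := by simp [ht]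
    have ht0 : 0 < t := by linarith
    have hlow : (2 : ℝ) ^ Nat.log 2 (1 + ℓ g) ≤ t := by
      have := Nat.pow_log_le_self 2 (x := 1 + ℓ g) (by omega)
      rw [ht]; exact_mod_cast this
    have htα := Real.rpow_pos_of_pos ht0 α
    calc (1 + t ^ α) ^ (-((|d| + 1) / α)) ≤ (t ^ α) ^ (-((|d| + 1) / α)) :=
          Real.rpow_le_rpow_of_nonpos htα (by linarith) (neg_nonpos.2 (by positivity))
      _ = t ^ (-(|d| + 1)) := by
          rw [← Real.rpow_mul ht0.le]; congr 1; field_simp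
      _ ≤ t ^ (-1 + -d) := Real.rpow_le_rpow_of_exponent_le ht1 (by linarith [le_abs_self d])
      _ = t⁻¹ * t ^ (-d) := by rw [Real.rpow_add ht0, Real.rpow_neg_one]
      _ ≤ 1 * (1 / 2) ^ Nat.log 2 (1 + ℓ g) * t ^ (-d) := by
          rw [one_mul, one_div, inv_pow]
          gcongr
end
end

section
/- Fix ε ∈ (0,1]. Let G be a countable group and μ a symmetric probability measure on G such that the bounded self-adjoint convolution operator T_μ f(x) = ∑_{y∈G} f(y) μ(y⁻¹x) on ℓ²(G) has spectrum contained in [−1+ε, 1]. Then there exists a constant C_ε such that for all positive integers u, v, m and all integers n with n ≥ u + 2v: sup_{x∈G} |μ^{(n+m)}(x) − μ^{(n)}(x)| ≤ C_ε (m/u) μ^{(2v)}(e). -/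
/-!
With `δ_x` the point mass at `x`, `μ⁽ⁿ⁾(x) = ⟪Tⁿ δ_e, δ_x⟫`, so for `n = k + 2v`
`μ⁽ⁿ⁺ᵐ⁾(x) - μ⁽ⁿ⁾(x) = ⟪Tᵏ (Tᵐ - 1) Tᵛ δ_e, Tᵛ δ_x⟫`,
and `‖Tᵛ δ_x‖² = ⟪T²ᵛ δ_x, δ_x⟫ = μ⁽²ᵛ⁾(e)` because `T` commutes with left translations.
It remains to see `‖Tᵏ (Tᵐ - 1)‖ ≤ 2m / (ε u)` for `k ≥ u`; telescoping in `m` reduces this to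
`‖Tᵏ (1 - T)‖ ≤ 2 / (ε u)`.

This is a spectral bound, proved here on a real Hilbert space without functional calculus.
The spectral hypothesis gives `-1 + ε ≤ T ≤ 1` as quadratic forms (`form_nonneg_of_spectrum`).
Then `ε (1 - T) ≤ 1 - T²`, so the energies `⟪(1 - T) Tʲ f, Tʲ f⟫`, which decrease in `j`, have
sum at most `‖f‖² / ε`; the `j`-th is therefore at most `‖f‖² / (ε (j + 1))` (`energy_bound`).
Polarization turns this into the operator bound (`inner_pow_sub_le`).
-/

open scoped BigOperators Classical

noncomputable section

open scoped InnerProductSpace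

/-! ### Form bounds for self-adjoint operators -/

section Hilbert

variable {E : Type*} [NormedAddCommGroup E] [InnerProductSpace ℝ E]

/-- If `A` is symmetric with nonnegative quadratic form, `‖A f‖² ≤ K ⟪A f, f⟫` for any positive
`K ≥ ‖A‖`. This is the nonnegativity of the form at `f - K⁻¹ A f`. -/
lemma norm_sq_le_of_form_nonneg (A : E →L[ℝ] E) (hA : ∀ f g, ⟪A f, g⟫_ℝ = ⟪f, A g⟫_ℝ)
    (hpos : ∀ f, 0 ≤ ⟪A f, f⟫_ℝ) (K : ℝ) (hK : 0 < K) (hAK : ‖A‖ ≤ K) (f : E) :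
    ‖A f‖ ^ 2 ≤ K * ⟪A f, f⟫_ℝ := by
  have h := hpos (K • f - A f)
  have h1 : ⟪A (A f), f⟫_ℝ = ‖A f‖ ^ 2 := by rw [hA, real_inner_self_eq_norm_sq]
  have h2 : ⟪A (A f), A f⟫_ℝ ≤ K * ‖A f‖ ^ 2 :=
    calc ⟪A (A f), A f⟫_ℝ ≤ ‖A (A f)‖ * ‖A f‖ := real_inner_le_norm _ _
      _ ≤ (K * ‖A f‖) * ‖A f‖ := by
        gcongr
        exact (A.le_opNorm _).trans (by gcongr)
      _ = _ := by ring
  simp only [map_sub, map_smul, inner_sub_left, inner_sub_right, real_inner_smul_left,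
    real_inner_smul_right, h1, real_inner_self_eq_norm_sq] at h
  have h3 : 0 ≤ K * (K * ⟪A f, f⟫_ℝ - ‖A f‖ ^ 2) := by nlinarith
  have := nonneg_of_mul_nonneg_right h3 hK
  linarith

/-- The infimum of the quadratic form of a self-adjoint operator on the unit sphere belongs to the
spectrum, so nonnegative spectrum forces a nonnegative form. The proof looks at the least `t ≥ 0`
such that `S + t` has nonnegative form: were it positive, `S + t` would be invertible, hence its
form bounded below by a positive multiple of `‖f‖²`, and `t` could be decreased. -/
lemma form_nonneg_of_spectrum [CompleteSpace E] (S : E →L[ℝ] E)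
    (hS : ∀ f g, ⟪S f, g⟫_ℝ = ⟪f, S g⟫_ℝ)
    (hspec : ∀ r ∈ spectrum ℝ S, 0 ≤ r) (f : E) : 0 ≤ ⟪S f, f⟫_ℝ := by
  set P : Set ℝ := {t | 0 ≤ t ∧ ∀ f, 0 ≤ ⟪S f, f⟫_ℝ + t * ‖f‖ ^ 2} with hP
  have hPne : P.Nonempty := by
    refine ⟨‖S‖, norm_nonneg _, fun f => ?_⟩
    have h1 := neg_le_of_abs_le (abs_real_inner_le_norm (S f) f)
    have h2 : ‖S f‖ * ‖f‖ ≤ ‖S‖ * ‖f‖ * ‖f‖ := by gcongr; exact S.le_opNorm f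
    nlinarith
  have hPbdd : BddBelow P := ⟨0, fun t ht => ht.1⟩
  have hPcl : IsClosed P := by
    have : P = Set.Ici 0 ∩ ⋂ f, {t | 0 ≤ ⟪S f, f⟫_ℝ + t * ‖f‖ ^ 2} := by
      ext t; simp [hP]
    rw [this]
    exact isClosed_Ici.inter
      (isClosed_iInter fun f => isClosed_le continuous_const (by fun_prop))
  have ht := hPcl.csInf_mem hPne hPbdd
  set t := sInf P with htdef
  rcases ht.1.eq_or_lt with h0 | h0
  · have := ht.2 f
    rwa [← h0, zero_mul, add_zero] at this
  exfalso
  have hns : -t ∉ spectrum ℝ S := fun h => by have := hspec _ h; linarith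
  rw [spectrum.notMem_iff] at hns
  set A : E →L[ℝ] E := S + t • 1 with hAdef
  have hunit : IsUnit A := by
    have : A = -(algebraMap ℝ (E →L[ℝ] E) (-t) - S) := by
      rw [Algebra.algebraMap_eq_smul_one, hAdef, neg_smul]; abel
    rw [this]; exact hns.neg
  have hAf : ∀ f, A f = S f + t • f := fun f => by simp [hAdef]
  have hform : ∀ f, ⟪A f, f⟫_ℝ = ⟪S f, f⟫_ℝ + t * ‖f‖ ^ 2 := fun f => by
    rw [hAf, inner_add_left, real_inner_smul_left, real_inner_self_eq_norm_sq]
  have hAsym : ∀ f g, ⟪A f, g⟫_ℝ = ⟪f, A g⟫_ℝ := fun f g => by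
    rw [hAf, hAf, inner_add_left, inner_add_right, real_inner_smul_left, real_inner_smul_right, hS]
  obtain ⟨B, hB⟩ := hunit.exists_left_inv
  have hBA : ∀ f, ‖f‖ ≤ (‖B‖ + 1) * ‖A f‖ := fun f => by
    have h1 : B (A f) = f := by
      rw [← mul_apply_eq_comp, hB, one_apply_eq_self]
    calc ‖f‖ = ‖B (A f)‖ := by rw [h1]
      _ ≤ ‖B‖ * ‖A f‖ := B.le_opNorm _
      _ ≤ _ := by gcongr; linarith
  have hK : (0 : ℝ) < ‖A‖ + 1 := by positivity
  have hKb : (0 : ℝ) < ‖B‖ + 1 := by positivity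
  set D := (‖B‖ + 1) ^ 2 * (‖A‖ + 1) with hD
  have hDpos : 0 < D := by positivity
  have hlow : ∀ f, ‖f‖ ^ 2 ≤ D * ⟪A f, f⟫_ℝ := fun f => by
    have h1 := norm_sq_le_of_form_nonneg A hAsym (fun f => by rw [hform]; exact ht.2 f)
      (‖A‖ + 1) hK (by linarith) f
    calc ‖f‖ ^ 2 ≤ ((‖B‖ + 1) * ‖A f‖) ^ 2 := by gcongr; exact hBA f
      _ = (‖B‖ + 1) ^ 2 * ‖A f‖ ^ 2 := by ring
      _ ≤ (‖B‖ + 1) ^ 2 * ((‖A‖ + 1) * ⟪A f, f⟫_ℝ) := by gcongr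
      _ = _ := by rw [hD]; ring
  have hmem : t - min t D⁻¹ ∈ P := by
    refine ⟨by linarith [min_le_left t D⁻¹], fun f => ?_⟩
    have h1 : D⁻¹ * ‖f‖ ^ 2 ≤ ⟪A f, f⟫_ℝ := by
      rw [inv_mul_le_iff₀ hDpos]; exact hlow f
    have h2 : min t D⁻¹ * ‖f‖ ^ 2 ≤ D⁻¹ * ‖f‖ ^ 2 := by
      gcongr; exact min_le_right _ _
    rw [hform] at h1
    linarith
  have h3 := csInf_le hPbdd hmem
  have h4 : 0 < min t D⁻¹ := lt_min h0 (by positivity)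
  linarith

/-- The product `(b - T)(T - a)` has nonnegative form as soon as both factors do: the factors `P`,
`Q` have sum `(b - a)·1`, so `(b - a) P Q = P Q P + Q P Q`. The conclusion is the
expanded form of this product at `f`. -/
lemma form_prod_nonneg (T : E →L[ℝ] E) (hT : ∀ f g, ⟪T f, g⟫_ℝ = ⟪f, T g⟫_ℝ) (a b : ℝ)
    (hab : a < b) (ha : ∀ f, a * ‖f‖ ^ 2 ≤ ⟪T f, f⟫_ℝ) (hb : ∀ f, ⟪T f, f⟫_ℝ ≤ b * ‖f‖ ^ 2)
    (f : E) : 0 ≤ (a + b) * ⟪T f, f⟫_ℝ - ‖T f‖ ^ 2 - a * b * ‖f‖ ^ 2 := by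
  have h1 := ha (b • f - T f)
  have h2 := hb (T f - a • f)
  have e1 : ⟪f, T f⟫_ℝ = ⟪T f, f⟫_ℝ := (hT f f).symm
  have e2 : ⟪T (T f), f⟫_ℝ = ‖T f‖ ^ 2 := by rw [hT, real_inner_self_eq_norm_sq]
  rw [← real_inner_self_eq_norm_sq] at h1 h2
  simp only [map_sub, map_smul, inner_sub_left, inner_sub_right, real_inner_smul_left,
    real_inner_smul_right, e1, e2] at h1 h2
  simp only [real_inner_self_eq_norm_sq] at h1 h2
  have h3 : 0 ≤ (b - a) * ((a + b) * ⟪T f, f⟫_ℝ - ‖T f‖ ^ 2 - a * b * ‖f‖ ^ 2) := by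
    linarith
  exact nonneg_of_mul_nonneg_right h3 (by linarith)

variable (T : E →L[ℝ] E)

lemma inner_pow_symm (hT : ∀ f g, ⟪T f, g⟫_ℝ = ⟪f, T g⟫_ℝ) (k : ℕ) (f g : E) :
    ⟪(T ^ k) f, g⟫_ℝ = ⟪f, (T ^ k) g⟫_ℝ := by
  induction k generalizing f g with
  | zero => simp
  | succ k ih =>
    rw [pow_succ, mul_apply_eq_comp, ih, hT, ← mul_apply_eq_comp,
      ← pow_succ', pow_succ]

/-- A self-adjoint operator with `-1 ≤ T ≤ 1` is a contraction, since `(1 - T)(1 + T) ≥ 0`. -/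
lemma norm_apply_le_of_form (hT : ∀ f g, ⟪T f, g⟫_ℝ = ⟪f, T g⟫_ℝ)
    (hlo : ∀ f, (-1) * ‖f‖ ^ 2 ≤ ⟪T f, f⟫_ℝ) (hhi : ∀ f, ⟪T f, f⟫_ℝ ≤ 1 * ‖f‖ ^ 2) (f : E) :
    ‖T f‖ ≤ ‖f‖ := by
  have h := form_prod_nonneg T hT (-1) 1 (by norm_num) hlo hhi f
  refine (sq_le_sq₀ (norm_nonneg _) (norm_nonneg _)).1 ?_
  linarith

/-! ### Decay of `Tᵏ (1 - T)` -/

lemma norm_pow_apply_le (hc : ∀ f, ‖T f‖ ≤ ‖f‖) (k : ℕ) (f : E) : ‖(T ^ k) f‖ ≤ ‖f‖ := by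
  induction k with
  | zero => simp
  | succ k ih => rw [pow_succ', mul_apply_eq_comp]; exact (hc _).trans ih

/-- The energies `⟪(1 - T) Tᴶ f, Tᴶ f⟫` decrease in `J` because `(1 - T)² (1 + T) ≥ 0`, and
`ε (1 - T) ≤ 1 - T²` makes their sum telescope; so the `J`-th is at most `‖f‖² / (ε (J + 1))`. -/
lemma energy_bound (hT : ∀ f g, ⟪T f, g⟫_ℝ = ⟪f, T g⟫_ℝ) {ε : ℝ} (hε : 0 < ε) (hε1 : ε ≤ 1)
    (hlo : ∀ f, (-1 + ε) * ‖f‖ ^ 2 ≤ ⟪T f, f⟫_ℝ) (hhi : ∀ f, ⟪T f, f⟫_ℝ ≤ 1 * ‖f‖ ^ 2)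
    (J : ℕ) (f : E) :
    ε * (J + 1) * ⟪(T ^ J) f - T ((T ^ J) f), (T ^ J) f⟫_ℝ ≤
      ‖f‖ ^ 2 - ‖(T ^ (J + 1)) f‖ ^ 2 := by
  have step : ∀ g, ε * ⟪g - T g, g⟫_ℝ ≤ ‖g‖ ^ 2 - ‖T g‖ ^ 2 := fun g => by
    have h := form_prod_nonneg T hT (-1 + ε) 1 (by linarith) hlo hhi g
    rw [inner_sub_left, real_inner_self_eq_norm_sq]
    linarith
  have anti : ∀ g, ⟪T g - T (T g), T g⟫_ℝ ≤ ⟪g - T g, g⟫_ℝ := fun g => by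
    have h := hlo (g - T g)
    have h' : 0 ≤ ε * ‖g - T g‖ ^ 2 := by positivity
    have h'' : 0 ≤ ⟪g - T g, g - T g⟫_ℝ + ⟪T (g - T g), g - T g⟫_ℝ := by
      rw [real_inner_self_eq_norm_sq]; linarith
    have e1 : ⟪g, T g⟫_ℝ = ⟪T g, g⟫_ℝ := (hT g g).symm
    have e2 : ⟪T (T g), g⟫_ℝ = ⟪T g, T g⟫_ℝ := hT _ _
    simp only [map_sub, inner_sub_left, inner_sub_right, e1, e2] at h'' ⊢
    linarith
  induction J with
  | zero => simpa using step f
  | succ J ih =>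
    have h1 := anti ((T ^ J) f)
    have h2 := step ((T ^ (J + 1)) f)
    have e : ∀ k, (T ^ (k + 1)) f = T ((T ^ k) f) := fun k => by
      rw [pow_succ', mul_apply_eq_comp]
    rw [e (J + 1)]
    rw [e J] at ih h2 ⊢
    have h3 : ε * (J + 1) * ⟪T ((T ^ J) f) - T (T ((T ^ J) f)), T ((T ^ J) f)⟫_ℝ ≤
        ε * (J + 1) * ⟪(T ^ J) f - T ((T ^ J) f), (T ^ J) f⟫_ℝ := by gcongr
    rw [Nat.cast_succ]
    linarith

/-- Polarized form of `energy_bound`; it encodes `‖Tᵏ (1 - T)‖ ≤ 2 / (ε u)` for `k ≥ u`. -/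
lemma inner_pow_sub_le (hT : ∀ f g, ⟪T f, g⟫_ℝ = ⟪f, T g⟫_ℝ) {ε : ℝ} (hε : 0 < ε) (hε1 : ε ≤ 1)
    (hlo : ∀ f, (-1 + ε) * ‖f‖ ^ 2 ≤ ⟪T f, f⟫_ℝ) (hhi : ∀ f, ⟪T f, f⟫_ℝ ≤ 1 * ‖f‖ ^ 2)
    (N : ℝ) (f g : E) (hf : ‖f‖ ^ 2 ≤ N) (hg : ‖g‖ ^ 2 ≤ N) (u k : ℕ) (hu : 0 < u) (hk : u ≤ k) :
    |⟪(T ^ (k + 1)) f - (T ^ k) f, g⟫_ℝ| ≤ 2 / ε / u * N := by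
  have hN : 0 ≤ N := (sq_nonneg _).trans hf
  have hc := norm_apply_le_of_form T hT
    (fun f => le_trans (by nlinarith [sq_nonneg ‖f‖]) (hlo f)) hhi
  obtain ⟨j, r, rfl, hr⟩ : ∃ j r, k = j + j + r ∧ r < 2 :=
    ⟨k / 2, k % 2, by omega, Nat.mod_lt _ two_pos⟩
  set f' := (T ^ r) f with hf'def
  have hf' : ‖f'‖ ^ 2 ≤ N :=
    le_trans (by gcongr; exact norm_pow_apply_le T hc r f) hf
  set Q : E → ℝ := fun p => ⟪(T ^ j) p - T ((T ^ j) p), (T ^ j) p⟫_ℝ with hQ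
  have hQ0 : ∀ p, 0 ≤ Q p := fun p => by
    have := hhi ((T ^ j) p)
    simp only [hQ, inner_sub_left, real_inner_self_eq_norm_sq]
    linarith
  have hQ1 : ∀ p, ε * (j + 1) * Q p ≤ ‖p‖ ^ 2 := fun p =>
    (energy_bound T hT hε hε1 hlo hhi j p).trans (by linarith [sq_nonneg ‖(T ^ (j + 1)) p‖])
  have key : 4 * ⟪(T ^ (j + j + r + 1)) f - (T ^ (j + j + r)) f, g⟫_ℝ = Q (f' - g) - Q (f' + g) := by
    have e1 : (T ^ (j + j + r)) f = (T ^ j) ((T ^ j) f') := by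
      simp only [pow_add, mul_apply_eq_comp, hf'def]
    have e2 : (T ^ (j + j + r + 1)) f = (T ^ j) (T ((T ^ j) f')) := by
      rw [show j + j + r + 1 = j + (1 + (j + r)) by ring]
      simp only [pow_add, mul_apply_eq_comp, hf'def, pow_one]
    rw [e1, e2, inner_sub_left, inner_pow_symm T hT j, inner_pow_symm T hT j]
    have e3 : ⟪T ((T ^ j) g), (T ^ j) f'⟫_ℝ = ⟪T ((T ^ j) f'), (T ^ j) g⟫_ℝ := by
      rw [hT, real_inner_comm]
    have e4 : ⟪(T ^ j) g, (T ^ j) f'⟫_ℝ = ⟪(T ^ j) f', (T ^ j) g⟫_ℝ := real_inner_comm _ _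
    simp only [hQ, map_add, map_sub, inner_add_left, inner_add_right, inner_sub_left,
      inner_sub_right, e3, e4]
    ring
  have hpar := parallelogram_law_with_norm ℝ f' g
  have hD : 0 < ε * (j + 1 : ℝ) := by positivity
  have hadd : ε * (j + 1) * Q (f' + g) ≤ 4 * N := by
    nlinarith [hQ1 (f' + g), sq_nonneg ‖f' - g‖]
  have hsub : ε * (j + 1) * Q (f' - g) ≤ 4 * N := by
    nlinarith [hQ1 (f' - g), sq_nonneg ‖f' + g‖]
  have hmain : ε * (j + 1) * |⟪(T ^ (j + j + r + 1)) f - (T ^ (j + j + r)) f, g⟫_ℝ| ≤ N := by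
    have ha : |⟪(T ^ (j + j + r + 1)) f - (T ^ (j + j + r)) f, g⟫_ℝ| ≤
        max (Q (f' - g)) (Q (f' + g)) / 4 := by
      rw [abs_le]
      constructor
      · linarith [le_max_right (Q (f' - g)) (Q (f' + g)), hQ0 (f' - g)]
      · linarith [le_max_left (Q (f' - g)) (Q (f' + g)), hQ0 (f' + g)]
    have hm : ε * (j + 1) * max (Q (f' - g)) (Q (f' + g)) ≤ 4 * N := by
      rcases max_choice (Q (f' - g)) (Q (f' + g)) with h | h <;> rw [h] <;> assumption
    have := mul_le_mul_of_nonneg_left ha hD.le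
    linarith
  have huj : (u : ℝ) ≤ 2 * (j + 1) := by
    have : u ≤ 2 * (j + 1) := by omega
    exact_mod_cast this
  have hu' : (0 : ℝ) < u := by exact_mod_cast hu
  have hle : ε * u * |⟪(T ^ (j + j + r + 1)) f - (T ^ (j + j + r)) f, g⟫_ℝ| ≤ 2 * N := by
    calc _ ≤ ε * (2 * (j + 1)) * |⟪(T ^ (j + j + r + 1)) f - (T ^ (j + j + r)) f, g⟫_ℝ| := by
          gcongr
      _ ≤ 2 * N := by linarith
  rw [show 2 / ε / u * N = 2 * N / (ε * u) by field_simp, le_div_iff₀ (by positivity)]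
  linarith

lemma inner_pow_sub_pow_le (hT : ∀ f g, ⟪T f, g⟫_ℝ = ⟪f, T g⟫_ℝ) {ε : ℝ} (hε : 0 < ε)
    (hε1 : ε ≤ 1)
    (hlo : ∀ f, (-1 + ε) * ‖f‖ ^ 2 ≤ ⟪T f, f⟫_ℝ) (hhi : ∀ f, ⟪T f, f⟫_ℝ ≤ 1 * ‖f‖ ^ 2)
    (N : ℝ) (f g : E) (hf : ‖f‖ ^ 2 ≤ N) (hg : ‖g‖ ^ 2 ≤ N) (u k m : ℕ) (hu : 0 < u)
    (hk : u ≤ k) :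
    |⟪(T ^ (k + m)) f - (T ^ k) f, g⟫_ℝ| ≤ m * (2 / ε / u * N) := by
  induction m with
  | zero => simp
  | succ m ih =>
    have h := inner_pow_sub_le T hT hε hε1 hlo hhi N f g hf hg u (k + m) hu (by omega)
    have e : (T ^ (k + (m + 1))) f - (T ^ k) f =
        ((T ^ (k + m + 1)) f - (T ^ (k + m)) f) + ((T ^ (k + m)) f - (T ^ k) f) := by
      rw [sub_add_sub_cancel, add_assoc]
    rw [e, inner_add_left]
    refine (abs_add_le _ _).trans ?_
    rw [Nat.cast_succ]
    linarith

end Hilbert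

/-! ### Convolution powers as matrix coefficients -/

section Group

variable {G : Type*}

/-- The point mass at `x`, as an element of `ℓ²(G)`. -/
def pointMass (x : G) : lp (fun _ : G => ℝ) 2 := lp.single 2 x (1 : ℝ)

lemma pointMass_apply (x y : G) : pointMass x y = if y = x then 1 else 0 := by
  simp [pointMass, Pi.single_apply]

lemma inner_pointMass (f : lp (fun _ : G => ℝ) 2) (x : G) : ⟪f, pointMass x⟫_ℝ = f x := by
  simp [pointMass, lp.inner_single_right]

variable [Group G] (μ : G → ℝ) (T : lp (fun _ : G => ℝ) 2 →L[ℝ] lp (fun _ : G => ℝ) 2)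

lemma pow_pointMass_one
    (hTconv : ∀ f : lp (fun _ : G => ℝ) 2, ∀ x : G, T f x = ∑' y : G, f y * μ (y⁻¹ * x))
    (n : ℕ) (x : G) : (T ^ n) (pointMass 1) x = convPow μ n x := by
  induction n generalizing x with
  | zero => simp [convPow, pointMass_apply]
  | succ n ih =>
    rw [pow_succ', mul_apply_eq_comp, hTconv]
    simp only [ih, convPow]

/-- Right convolution commutes with left translation. -/
lemma pow_pointMass
    (hTconv : ∀ f : lp (fun _ : G => ℝ) 2, ∀ x : G, T f x = ∑' y : G, f y * μ (y⁻¹ * x))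
    (n : ℕ) (x y : G) : (T ^ n) (pointMass x) y = convPow μ n (x⁻¹ * y) := by
  induction n generalizing y with
  | zero => simp [convPow, pointMass_apply, inv_mul_eq_one, eq_comm]
  | succ n ih =>
    rw [pow_succ', mul_apply_eq_comp, hTconv]
    simp only [ih, convPow]
    rw [← (Equiv.mulLeft x⁻¹).tsum_eq (fun w => convPow μ n w * μ (w⁻¹ * (x⁻¹ * y)))]
    simp [mul_assoc]

end Group

/-- time regularity of convolution powers under a spectral gap. -/
theorem stmt17 {G : Type*} [Group G] [Countable G]
    (ε : ℝ) (hε : 0 < ε) (hε1 : ε ≤ 1)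
    (μ : G → ℝ) (hμ : IsSymmProb μ)
    (T : lp (fun _ : G => ℝ) 2 →L[ℝ] lp (fun _ : G => ℝ) 2)
    (hTconv : ∀ f : lp (fun _ : G => ℝ) 2, ∀ x : G,
      T f x = ∑' y : G, f y * μ (y⁻¹ * x))
    (hTsa : IsSelfAdjoint T)
    (hspec : spectrum ℝ T ⊆ Set.Icc (-1 + ε) 1) :
    ∃ Cε : ℝ, ∀ u v m n : ℕ, 0 < u → 0 < v → 0 < m → u + 2 * v ≤ n →
      ∀ x : G, |convPow μ (n + m) x - convPow μ n x| ≤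
        Cε * ((m : ℝ) / u) * convPow μ (2 * v) 1 := by
  have hT : ∀ f g, ⟪T f, g⟫_ℝ = ⟪f, T g⟫_ℝ := fun f g => by
    have := ContinuousLinearMap.adjoint_inner_right T f g
    rw [← this, ← ContinuousLinearMap.star_eq_adjoint, hTsa.star_eq]
  -- The form bounds `-1 + ε ≤ T ≤ 1` come from the spectra of `T - (-1 + ε)` and `1 - T`.
  have hlo : ∀ f, (-1 + ε) * ‖f‖ ^ 2 ≤ ⟪T f, f⟫_ℝ := fun f => by
    have h := form_nonneg_of_spectrum (T - algebraMap ℝ _ (-1 + ε)) (fun f g => by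
        simp [Algebra.algebraMap_eq_smul_one, inner_sub_left, inner_sub_right,
          real_inner_smul_left, real_inner_smul_right, hT])
      (fun r hr => by
        rw [← spectrum.sub_singleton_eq] at hr
        simp only [Set.sub_singleton, Set.mem_image] at hr
        obtain ⟨s, hs, rfl⟩ := hr
        linarith [(hspec hs).1]) f
    simp only [Algebra.algebraMap_eq_smul_one, sub_apply,
      smul_apply, one_apply_eq_self, inner_sub_left,
      real_inner_smul_left, real_inner_self_eq_norm_sq] at h
    linarith
  have hhi : ∀ f, ⟪T f, f⟫_ℝ ≤ 1 * ‖f‖ ^ 2 := fun f => by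
    have h := form_nonneg_of_spectrum (algebraMap ℝ _ 1 - T) (fun f g => by
        simp [inner_sub_left, inner_sub_right, hT])
      (fun r hr => by
        rw [← spectrum.singleton_sub_eq] at hr
        simp only [Set.singleton_sub, Set.mem_image] at hr
        obtain ⟨s, hs, rfl⟩ := hr
        linarith [(hspec hs).2]) f
    simp only [map_one, sub_apply, one_apply_eq_self,
      inner_sub_left, real_inner_self_eq_norm_sq] at h
    linarith
  refine ⟨2 / ε, fun u v m n hu hv hm hn x => ?_⟩
  obtain ⟨k, rfl⟩ : ∃ k, n = v + k + v := ⟨n - 2 * v, by omega⟩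
  have hnorm : ∀ y : G, ‖(T ^ v) (pointMass y)‖ ^ 2 = convPow μ (2 * v) 1 := fun y => by
    rw [← real_inner_self_eq_norm_sq, ← inner_pow_symm T hT, ← mul_apply_eq_comp,
      ← pow_add, inner_pointMass, pow_pointMass μ T hTconv, two_mul, inv_mul_cancel]
  have hval : ∀ l, convPow μ (v + l + v) x =
      ⟪(T ^ l) ((T ^ v) (pointMass 1)), (T ^ v) (pointMass x)⟫_ℝ := fun l => by
    rw [← inner_pow_symm T hT v, inner_pointMass, ← pow_pointMass_one μ T hTconv, pow_add, pow_add]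
    rfl
  have h := inner_pow_sub_pow_le T hT hε hε1 hlo hhi _ _ _ (hnorm 1).le (hnorm x).le u k m hu
    (by omega)
  rw [inner_sub_left, ← hval, ← hval] at h
  rw [show v + k + v + m = v + (k + m) + v by ring]
  refine h.trans (le_of_eq ?_)
  ring
end
end
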